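/- arXiv:1005.5569 — 2 statements merged into one kernel-verified Lean document; each statement's English description precedes it below -/
import Mathlib

section
/- Let F_n be the free group on n generators (n ≥ 1). Then the minimal exponential growth rate ω(F_n) = inf over all finite generating systems S of ω(F_n, S) equals 2n − 1; in particular ω(F_n, S) ≥ 2n − 1 for every finite generating system S, with equality when S is a free generating system. -/
/-!
Let `S` be a finite generating set of `F_n`. Its image spans the rationalized abelianization
`ℚ^n`, so `S` contains `s_1, …, s_n` whose exponent-sum matrix has nonzero determinant
(`exists_det_ne_zero`). These `n` elements freely generate a free subgroup
(`lift_injective_of_det_ne_zero`). Hence the ball of radius `k` for `S` contains at least as many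
elements as there are reduced words of length `k`, namely `2n (2n - 1)^(k - 1) ≥ (2n - 1)^k`, and
the lower bound follows. For a free basis the ball of radius `k` consists of the reduced words of
length at most `k`, of which there are at most `4 n k (2n - 1)^k`, and the `k`-th root of this
bound tends to `2n - 1`.

To see that `s_1, …, s_n` are free generators of the subgroup they generate, let `w ≠ 1`. Writing
`w` as a product of syllables `x_{i_1}^{e_1} ⋯ x_{i_k}^{e_k}` gives a unipotent representation
over `ZMod p` in which the corner entry of the matrix of `w` is `e_1 ⋯ e_k` (`sylRep_suffix`); its
image `N` is a finite `p`-group. Choose `p` dividing neither `e_1 ⋯ e_k` nor the determinant. As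
`N` is nilpotent of order prime to the determinant, the equations `s_i(y) = f(x_i)` have a solution
`y` in `N` for the representation `f` (`exists_lift_eq`, by induction on the centre), so that
`f(w) = (w(s))(y)`. Since `f(w) ≠ 1`, also `w(s) ≠ 1`.
-/

/-! Common definitions: word metrics, quasi-isometries, rough isometries. -/

/-- `g` is a product of `n` elements of `S ∪ S⁻¹`. -/
def IsWordProd {G : Type*} [Group G] (S : Set G) (g : G) (n : ℕ) : Prop :=
  ∃ l : List G, l.length = n ∧ (∀ s ∈ l, s ∈ S ∪ S⁻¹) ∧ l.prod = g

/-- The word metric associated to a generating system `S`: the least `n` such that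
`x⁻¹ * y` is a product of `n` elements of `S ∪ S⁻¹`. -/
noncomputable def wdist {G : Type*} [Group G] (S : Set G) (x y : G) : ℕ :=
  sInf {n | IsWordProd S (x⁻¹ * y) n}

/-- The word norm `‖g‖_S = d_S(e, g)`. -/
noncomputable def wnorm {G : Type*} [Group G] (S : Set G) (g : G) : ℕ :=
  wdist S 1 g

/-- `(η, η')` is a `(lam, eps)`-quasi-isometry between `(X, dX)` and `(Y, dY)`. -/
def IsQIPair {X Y : Type*} (dX : X → X → ℝ) (dY : Y → Y → ℝ)
    (η : X → Y) (η' : Y → X) (lam eps : ℝ) : Prop :=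
  (∀ x x' : X, lam⁻¹ * dX x x' - eps ≤ dY (η x) (η x') ∧
      dY (η x) (η x') ≤ lam * dX x x' + eps) ∧
  (∀ y y' : Y, lam⁻¹ * dY y y' - eps ≤ dX (η' y) (η' y') ∧
      dX (η' y) (η' y') ≤ lam * dY y y' + eps) ∧
  (∀ y : Y, dY (η (η' y)) y ≤ eps) ∧
  (∀ x : X, dX (η' (η x)) x ≤ eps)

/-- `(η, η')` is an `eps`-isometry between `(X, dX)` and `(Y, dY)`. -/
def IsEpsIsomPair {X Y : Type*} (dX : X → X → ℝ) (dY : Y → Y → ℝ)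
    (η : X → Y) (η' : Y → X) (eps : ℝ) : Prop :=
  (∀ x x' : X, |dX x x' - dY (η x) (η x')| ≤ eps) ∧
  (∀ y y' : Y, |dY y y' - dX (η' y) (η' y')| ≤ eps) ∧
  (∀ y : Y, dY (η (η' y)) y ≤ eps) ∧
  (∀ x : X, dX (η' (η x)) x ≤ eps)

/-- The real-valued word metric. -/
noncomputable def wdistR {G : Type*} [Group G] (S : Set G) (x y : G) : ℝ :=
  (wdist S x y : ℝ)

/-- The ball of radius `k` around the identity in the word metric of `S`. -/
def wball {G : Type*} [Group G] (S : Set G) (k : ℕ) : Set G :=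
  {g : G | wdist S 1 g ≤ k}

/-- The exponential growth rate `ω(G, S) = limsup_k (#B_{G,S}(k))^(1/k)`. -/
noncomputable def growthRate {G : Type*} [Group G] (S : Set G) : ℝ :=
  Filter.limsup (fun k : ℕ => ((wball S k).ncard : ℝ) ^ ((k : ℝ)⁻¹)) Filter.atTop

/-! ### Word equations in finite nilpotent groups -/

/-- Abelianization of the free group: the vector of exponent sums, written multiplicatively. -/
def expHom (n : ℕ) : FreeGroup (Fin n) →* Multiplicative (Fin n → ℤ) :=
  FreeGroup.lift fun i => Multiplicative.ofAdd (Pi.single i 1)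

/-- Exponent sum of the `j`-th generator in `g`. -/
def expSum {n : ℕ} (g : FreeGroup (Fin n)) (j : Fin n) : ℤ :=
  Multiplicative.toAdd (expHom n g) j

lemma expSum_mul {n : ℕ} (g h : FreeGroup (Fin n)) (j : Fin n) :
    expSum (g * h) j = expSum g j + expSum h j := by
  simp [expSum]

lemma expSum_inv {n : ℕ} (g : FreeGroup (Fin n)) (j : Fin n) :
    expSum g⁻¹ j = - expSum g j := by
  simp [expSum]

lemma expSum_one {n : ℕ} (j : Fin n) : expSum (1 : FreeGroup (Fin n)) j = 0 := by
  simp [expSum]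

lemma expSum_of {n : ℕ} (i j : Fin n) :
    expSum (FreeGroup.of i) j = if j = i then 1 else 0 := by
  simp [expSum, expHom, Pi.single_apply]

/-- In a commutative group the value of a word depends only on its exponent sums. -/
lemma lift_eq_prod_zpow {n : ℕ} {M : Type*} [CommGroup M] (z : Fin n → M)
    (g : FreeGroup (Fin n)) : FreeGroup.lift z g = ∏ j, z j ^ expSum g j := by
  induction g using FreeGroup.induction_on with
  | C1 => simp [expSum_one]
  | of i => simp [expSum_of]
  | inv_of i h => simp only [map_inv, h, expSum_inv, zpow_neg, Finset.prod_inv_distrib]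
  | mul g h hg hh => simp only [map_mul, hg, hh, expSum_mul, zpow_add, Finset.prod_mul_distrib]

/-- Changing the images of the generators by central elements changes the image of a word `g`
only through the exponent sums of `g`. -/
lemma lift_mul_center {n : ℕ} {N : Type*} [Group N] (y : Fin n → N)
    (z : Fin n → Subgroup.center N) (g : FreeGroup (Fin n)) :
    FreeGroup.lift (fun j => y j * (z j : N)) g =
      FreeGroup.lift y g * (FreeGroup.lift z g : Subgroup.center N) := by
  have comm : ∀ (c : Subgroup.center N) (x : N), (c : N) * x = x * c := fun c x =>
    (Subgroup.mem_center_iff.1 c.2 x).symm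
  induction g using FreeGroup.induction_on with
  | C1 => simp
  | of i => simp
  | inv_of i h => simp [← comm]
  | mul g h hg hh =>
    simp only [map_mul, hg, hh, Subgroup.coe_mul]
    rw [mul_assoc, ← mul_assoc _ (FreeGroup.lift y h), comm, mul_assoc, mul_assoc]

/-- A square integer system is solvable in a finite abelian group whose order is prime to the
determinant (Cramer's rule). -/
lemma exists_solution {n : ℕ} (A : Matrix (Fin n) (Fin n) ℤ) {M : Type*} [CommGroup M]
    (hc : IsCoprime (Nat.card M : ℤ) A.det) (c : Fin n → M) :
    ∃ z : Fin n → M, ∀ i, ∏ j, z j ^ A i j = c i := by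
  obtain ⟨a, m, ham⟩ := hc
  refine ⟨fun j => ∏ k, c k ^ (m * A.adjugate j k), fun i => ?_⟩
  have key : ∀ k, ∑ j, m * A.adjugate j k * A i j = if i = k then m * A.det else 0 := by
    intro k
    have h := congrFun (congrFun (Matrix.mul_adjugate A) i) k
    rw [Matrix.mul_apply] at h
    calc ∑ j, m * A.adjugate j k * A i j = m * ∑ j, A i j * A.adjugate j k := by
          rw [Finset.mul_sum]; exact Finset.sum_congr rfl fun _ _ => by ring
      _ = _ := by rw [h]; simp [Matrix.one_apply]
  have hpow : c i ^ (m * A.det) = c i := by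
    have : m * A.det = 1 + (Nat.card M : ℤ) * (-a) := by linarith
    rw [this, zpow_add, zpow_mul, zpow_natCast, pow_card_eq_one']
    simp
  calc ∏ j, (∏ k, c k ^ (m * A.adjugate j k)) ^ A i j
      = ∏ k, ∏ j, c k ^ (m * A.adjugate j k * A i j) := by
        rw [Finset.prod_comm]
        refine Finset.prod_congr rfl fun j _ => ?_
        rw [← Finset.prod_zpow]
        exact Finset.prod_congr rfl fun k _ => (zpow_mul _ _ _).symm
    _ = ∏ k, c k ^ (if i = k then m * A.det else 0) := by
        refine Finset.prod_congr rfl fun k _ => ?_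
        rw [← key k]
        exact (map_sum (zmultiplesHom (Additive M) (Additive.ofMul (c k))) _ _).symm
    _ = c i := by
        simp [hpow]

/-- If the exponent-sum matrix of `s` has determinant prime to the order of a finite nilpotent
group `N`, then the word equations `s i (y) = t i` are solvable in `N`. A solution modulo the
centre is corrected by central elements, and the correction solves a linear system. -/
lemma exists_lift_eq {n : ℕ} (s : Fin n → FreeGroup (Fin n)) (N : Type*) [Group N]
    [Group.IsNilpotent N] :
    Finite N → IsCoprime (Nat.card N : ℤ) (Matrix.of fun i j => expSum (s i) j).det →
      ∀ t : Fin n → N, ∃ y : Fin n → N, ∀ i, FreeGroup.lift y (s i) = t i := by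
  refine Group.nilpotent_center_quotient_ind (P := fun N _ _ => Finite N →
    IsCoprime (Nat.card N : ℤ) (Matrix.of fun i j => expSum (s i) j).det →
      ∀ t : Fin n → N, ∃ y : Fin n → N, ∀ i, FreeGroup.lift y (s i) = t i) N ?_ ?_
  · intro N _ _ _ _ t
    exact ⟨t, fun i => Subsingleton.elim _ _⟩
  · intro N _ _ ih _ hc t
    have hq : (Nat.card (N ⧸ Subgroup.center N) : ℤ) ∣ Nat.card N :=
      Int.natCast_dvd_natCast.2 (Subgroup.card_quotient_dvd_card _)
    have hz : (Nat.card (Subgroup.center N) : ℤ) ∣ Nat.card N :=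
      Int.natCast_dvd_natCast.2 (Subgroup.card_subgroup_dvd_card _)
    obtain ⟨y', hy'⟩ := ih inferInstance (hc.of_isCoprime_of_dvd_left hq) fun i => (t i : N ⧸ _)
    choose y hy using fun j => QuotientGroup.mk_surjective (y' j)
    have hlift : ∀ g, ((FreeGroup.lift y g : N) : N ⧸ Subgroup.center N) =
        FreeGroup.lift y' g := by
      intro g
      have : (QuotientGroup.mk' (Subgroup.center N)).comp (FreeGroup.lift y) =
          FreeGroup.lift y' := by
        ext j
        simp [hy]
      exact DFunLike.congr_fun this g
    have hmem : ∀ i, (FreeGroup.lift y (s i))⁻¹ * t i ∈ Subgroup.center N := fun i => by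
      rw [← QuotientGroup.eq, hlift, hy']
    let _ : CommGroup (Subgroup.center N) :=
      { (inferInstance : Group (Subgroup.center N)) with
        mul_comm := fun a b => Subtype.ext (Subgroup.mem_center_iff.1 b.2 a) }
    obtain ⟨z, hz⟩ := exists_solution _ (hc.of_isCoprime_of_dvd_left hz)
      fun i => (⟨_, hmem i⟩ : Subgroup.center N)
    refine ⟨fun j => y j * (z j : N), fun i => ?_⟩
    have := hz i
    simp only [Matrix.of_apply] at this
    rw [lift_mul_center, lift_eq_prod_zpow z, this]
    simp

/-! ### Syllables and unipotent representations -/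

/-- The product of the syllables `x_i ^ e` listed in `L`. -/
def sylProd {n : ℕ} (L : List (Fin n × ℤ)) : FreeGroup (Fin n) :=
  (L.map fun q => FreeGroup.of q.1 ^ q.2).prod

/-- Syllable normal form: consecutive syllables involve different generators. -/
def SylChain {n : ℕ} (L : List (Fin n × ℤ)) : Prop :=
  L.IsChain (fun a b => a.1 ≠ b.1) ∧ ∀ q ∈ L, q.2 ≠ 0

lemma exists_sylProd_cons {n : ℕ} (i : Fin n) (e : ℤ) (L : List (Fin n × ℤ)) (hL : SylChain L) :
    ∃ L' : List (Fin n × ℤ), SylChain L' ∧ sylProd L' = FreeGroup.of i ^ e * sylProd L := by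
  by_cases he : e = 0
  · exact ⟨L, hL, by simp [he]⟩
  rcases L with _ | ⟨⟨j, e'⟩, L⟩
  · exact ⟨[(i, e)], by simp [SylChain, he], by simp [sylProd]⟩
  · by_cases hij : i = j
    · subst hij
      by_cases hs : e + e' = 0
      · refine ⟨L, ⟨hL.1.tail, fun q hq => hL.2 q (List.mem_cons_of_mem _ hq)⟩, ?_⟩
        simp only [sylProd, List.map_cons, List.prod_cons]
        rw [← mul_assoc, ← zpow_add, hs]
        simp
      · refine ⟨(i, e + e') :: L, ⟨?_, ?_⟩, ?_⟩
        · have := hL.1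
          rw [List.isChain_cons] at this ⊢
          exact this
        · intro q hq
          rcases List.mem_cons.1 hq with rfl | hq
          · exact hs
          · exact hL.2 q (List.mem_cons_of_mem _ hq)
        · simp only [sylProd, List.map_cons, List.prod_cons]
          rw [← mul_assoc, ← zpow_add]
    · refine ⟨(i, e) :: (j, e') :: L, ⟨?_, ?_⟩, by simp [sylProd]⟩
      · exact List.isChain_cons_cons.2 ⟨hij, hL.1⟩
      · intro q hq
        rcases List.mem_cons.1 hq with rfl | hq
        · exact he
        · exact hL.2 q hq

/-- Every element of the free group has a syllable normal form. -/
lemma exists_sylProd {n : ℕ} (g : FreeGroup (Fin n)) :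
    ∃ L : List (Fin n × ℤ), SylChain L ∧ sylProd L = g := by
  suffices h : ∀ g : FreeGroup (Fin n), ∀ L, SylChain L →
      ∃ L' : List (Fin n × ℤ), SylChain L' ∧ sylProd L' = g * sylProd L by
    simpa [sylProd] using h g [] (by simp [SylChain])
  intro g
  induction g using FreeGroup.induction_on with
  | C1 => exact fun L hL => ⟨L, hL, by simp⟩
  | of i => exact fun L hL => by simpa using exists_sylProd_cons i 1 L hL
  | inv_of i h => exact fun L hL => by simpa using exists_sylProd_cons i (-1) L hL
  | mul g h hg hh =>
    intro L hL
    obtain ⟨L₁, h₁, e₁⟩ := hh L hL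
    obtain ⟨L₂, h₂, e₂⟩ := hg L₁ h₁
    exact ⟨L₂, h₂, by rw [e₂, e₁, mul_assoc]⟩

/-- The `0`-`1` matrix whose `(a, a + 1)` entry is `1` exactly when the `a`-th syllable of `L`
is a power of the `i`-th generator. -/
def sylMat {n : ℕ} (p : ℕ) (L : List (Fin n × ℤ)) (i : Fin n) :
    Matrix (Fin (L.length + 1)) (Fin (L.length + 1)) (ZMod p) :=
  Matrix.of fun a b =>
    if (b : ℕ) = a + 1 ∧ (L.map Prod.fst)[(a : ℕ)]? = some i then 1 else 0

/-- `sylMat p L i` squares to zero, since no two consecutive syllables involve `x_i`. -/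
lemma sylMat_mul_self {n : ℕ} (p : ℕ) (L : List (Fin n × ℤ)) (hL : SylChain L) (i : Fin n) :
    sylMat p L i * sylMat p L i = 0 := by
  ext a c
  rw [Matrix.mul_apply]
  refine Finset.sum_eq_zero fun b _ => ?_
  simp only [sylMat, Matrix.of_apply]
  split_ifs with h₁ h₂ <;> simp
  rw [h₁.1] at h₂
  have h₃ := h₁.2
  have h₄ := h₂.2
  simp only [List.getElem?_map, Option.map_eq_some_iff] at h₃ h₄
  obtain ⟨q, hq, hqi⟩ := h₃
  obtain ⟨r, hr, hri⟩ := h₄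
  obtain ⟨ha, hq⟩ := List.getElem?_eq_some_iff.1 hq
  obtain ⟨hb, hr⟩ := List.getElem?_eq_some_iff.1 hr
  have := List.isChain_iff_getElem.1 hL.1 a hb
  rw [hq, hr, hqi, hri] at this
  exact (this rfl).elim

/-- The unit `1 + N` for a square-zero element `N`. -/
def unipUnit {R : Type*} [Ring R] (N : R) (h : N * N = 0) : Rˣ :=
  ⟨1 + N, 1 - N, by noncomm_ring; simp [h], by noncomm_ring; simp [h]⟩

lemma unipUnit_zpow {R : Type*} [Ring R] (N : R) (h : N * N = 0) (e : ℤ) :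
    ((unipUnit N h ^ e : Rˣ) : R) = 1 + e • N := by
  induction e using Int.induction_on with
  | zero => simp
  | succ k ih =>
    rw [zpow_add_one, Units.val_mul, ih]
    simp only [unipUnit, add_smul, one_smul, mul_add, add_mul, smul_mul_assoc, h, one_mul, mul_one,
      smul_zero, add_zero]
    abel
  | pred k ih =>
    rw [zpow_sub_one, Units.val_mul, ih]
    have : ((unipUnit N h)⁻¹ : Rˣ).val = 1 - N := rfl
    rw [this]
    simp only [sub_smul, one_smul, mul_sub, add_mul, smul_mul_assoc, h, one_mul, mul_one,
      smul_zero, add_zero]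
    abel

/-- The unipotent representation attached to a syllable word: the `i`-th generator acts as
`1 + sylMat p L i`. -/
def sylRep {n : ℕ} (p : ℕ) (L : List (Fin n × ℤ)) (hL : SylChain L) :
    FreeGroup (Fin n) →* (Matrix (Fin (L.length + 1)) (Fin (L.length + 1)) (ZMod p))ˣ :=
  FreeGroup.lift fun i => unipUnit (sylMat p L i) (sylMat_mul_self p L hL i)

/-- The last column of the matrix of a suffix of `L`: it vanishes above the row where the suffix
starts, and in that row it is the product of the exponents of the suffix. -/
lemma sylRep_suffix {n : ℕ} (p : ℕ) (L : List (Fin n × ℤ)) (hL : SylChain L)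
    (suf pre : List (Fin n × ℤ)) (h : pre ++ suf = L) (r : Fin (L.length + 1)) :
    ((r : ℕ) < pre.length → (sylRep p L hL (sylProd suf)).val r (Fin.last _) = 0) ∧
    ((r : ℕ) = pre.length → (sylRep p L hL (sylProd suf)).val r (Fin.last _) =
      ((suf.map Prod.snd).prod : ℤ)) := by
  induction suf generalizing pre r with
  | nil =>
    have hl : pre.length = L.length := by simp [← h]
    constructor
    · intro hr
      have : r ≠ Fin.last _ := fun h' => by simp [h', hl] at hr
      simp [sylProd, this]
    · intro hr
      have : r = Fin.last _ := Fin.ext (by simp [hr, hl])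
      simp [sylProd, this]
  | cons q suf ih =>
    have ih' := ih (pre ++ [q]) (by simp [← h])
    have hlen : (pre ++ [q]).length = pre.length + 1 := by simp
    have hle : pre.length + 1 < L.length + 1 := by simp [← h]
    have hq : (L.map Prod.fst)[pre.length]? = some q.1 := by simp [← h]
    have hval : (sylRep p L hL (sylProd (q :: suf))).val r (Fin.last _) =
        (sylRep p L hL (sylProd suf)).val r (Fin.last _) + q.2 •
          ∑ b, sylMat p L q.1 r b * (sylRep p L hL (sylProd suf)).val b (Fin.last _) := by
      have : sylProd (q :: suf) = FreeGroup.of q.1 ^ q.2 * sylProd suf := by simp [sylProd]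
      rw [this, map_mul, map_zpow, Units.val_mul]
      have h2 : sylRep p L hL (FreeGroup.of q.1) =
        unipUnit (sylMat p L q.1) (sylMat_mul_self p L hL q.1) := by simp [sylRep]
      rw [h2, unipUnit_zpow, add_mul, one_mul, Matrix.add_apply, smul_mul_assoc,
        Matrix.smul_apply, Matrix.mul_apply]
    constructor
    · intro hr
      rw [hval, (ih' r).1 (by omega), Finset.sum_eq_zero]
      · simp
      · intro b _
        simp only [sylMat, Matrix.of_apply]
        split_ifs with hb
        · rw [(ih' b).1 (by omega), mul_zero]
        · simp
    · intro hr
      rw [hval, (ih' r).1 (by omega), Finset.sum_eq_single ⟨pre.length + 1, hle⟩]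
      · rw [(ih' ⟨pre.length + 1, hle⟩).2 (by simp)]
        simp [sylMat, hr, hq]
      · intro b _ hb
        simp only [sylMat, Matrix.of_apply]
        rw [if_neg, zero_mul]
        rintro ⟨hb', -⟩
        exact hb (Fin.ext (by simp [hb', hr]))
      · simp

/-- A matrix is unitriangular if it is upper triangular with ones on the diagonal. -/
def IsUnitri {m : ℕ} {R : Type*} [CommRing R] (M : Matrix (Fin m) (Fin m) R) : Prop :=
  ∀ a b, (b < a → M a b = 0) ∧ (a = b → M a b = 1)

lemma IsUnitri.mul {m : ℕ} {R : Type*} [CommRing R] {M M' : Matrix (Fin m) (Fin m) R}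
    (h : IsUnitri M) (h' : IsUnitri M') : IsUnitri (M * M') := by
  intro a b
  constructor
  · intro hba
    rw [Matrix.mul_apply]
    refine Finset.sum_eq_zero fun c _ => ?_
    rcases lt_or_ge c a with hc | hc
    · rw [(h a c).1 hc, zero_mul]
    · rw [(h' c b).1 (hba.trans_le hc), mul_zero]
  · rintro rfl
    rw [Matrix.mul_apply, Finset.sum_eq_single a]
    · rw [(h a a).2 rfl, (h' a a).2 rfl, one_mul]
    · intro c _ hc
      rcases lt_or_gt_of_ne hc with hc | hc
      · rw [(h a c).1 hc, zero_mul]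
      · rw [(h' c a).1 hc, mul_zero]
    · simp

/-- Cayley–Hamilton: the characteristic polynomial of a unitriangular matrix is `(X - 1) ^ m`. -/
lemma IsUnitri.sub_one_pow {m : ℕ} {R : Type*} [CommRing R] {M : Matrix (Fin m) (Fin m) R}
    (h : IsUnitri M) : (M - 1) ^ m = 0 := by
  have h1 : M.charpoly = (Polynomial.X - Polynomial.C 1) ^ m := by
    rw [Matrix.charpoly_of_isUpperTriangular M fun a b hab => (h a b).1 hab]
    simp [(h _ _).2 rfl]
  have := Matrix.aeval_self_charpoly M
  rw [h1] at this
  simpa using this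

lemma isUnitri_sylRep {n : ℕ} (p : ℕ) (L : List (Fin n × ℤ)) (hL : SylChain L)
    (g : FreeGroup (Fin n)) : IsUnitri (sylRep p L hL g).val := by
  have base : ∀ (i : Fin n) (e : ℤ), IsUnitri (1 + e • sylMat p L i) := by
    intro i e a b
    constructor
    · intro hba
      have h1 : a ≠ b := hba.ne'
      have h2 : ¬ (b : ℕ) = a + 1 := by have : (b : ℕ) < a := hba; omega
      simp [sylMat, h1, h2]
    · rintro rfl
      simp [sylMat]
  have hof : ∀ i, sylRep p L hL (FreeGroup.of i) =
      unipUnit (sylMat p L i) (sylMat_mul_self p L hL i) := fun i => by simp [sylRep]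
  induction g using FreeGroup.induction_on with
  | C1 => intro a b; simp +contextual [ne_of_gt]
  | of i =>
    rw [← zpow_one (sylRep p L hL _), hof, unipUnit_zpow]
    exact base i 1
  | inv_of i h =>
    rw [map_inv, ← zpow_neg_one, hof, unipUnit_zpow]
    exact base i (-1)
  | mul g h hg hh =>
    rw [map_mul, Units.val_mul]
    exact hg.mul hh

/-- The unipotent representation over `ZMod p` has image a `p`-group: if `(M - 1) ^ m = 0` and
`m ≤ p ^ r`, then `M ^ (p ^ r) - 1 = (M - 1) ^ (p ^ r) = 0`. -/
lemma isPGroup_range {n : ℕ} (p : ℕ) [hp : Fact p.Prime] (L : List (Fin n × ℤ))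
    (hL : SylChain L) : IsPGroup p (sylRep p L hL).range := by
  rintro ⟨_, g, rfl⟩
  refine ⟨L.length + 1, ?_⟩
  apply Subtype.ext
  apply Units.ext
  have h0 := (isUnitri_sylRep p L hL g).sub_one_pow
  have hle : L.length + 1 ≤ p ^ (L.length + 1) := (Nat.lt_pow_self hp.out.one_lt).le
  have h1 := pow_eq_zero_of_le hle h0
  rw [sub_pow_char_pow_of_commute _ _ (Commute.one_right _), one_pow, sub_eq_zero] at h1
  simpa using h1

/-! ### Free subgroups of full rank -/

/-- A family of `n` elements of the free group of rank `n` with independent abelianizations is a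
basis of a free subgroup. -/
lemma lift_injective_of_det_ne_zero {n : ℕ} (s : Fin n → FreeGroup (Fin n))
    (hdet : (Matrix.of fun i j => expSum (s i) j).det ≠ 0) :
    Function.Injective (FreeGroup.lift s) := by
  rw [injective_iff_map_eq_one]
  intro w hw
  by_contra hw1
  obtain ⟨L, hL, rfl⟩ := exists_sylProd w
  set d := (Matrix.of fun i j => expSum (s i) j).det
  have hE : (L.map Prod.snd).prod ≠ 0 := by
    rw [Ne, List.prod_eq_zero_iff]
    intro h
    obtain ⟨q, hq, h0⟩ := List.mem_map.1 h
    exact hL.2 q hq h0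
  -- A prime larger than `|d * E|` divides neither the determinant nor the exponent product.
  obtain ⟨p, hple, hp⟩ := Nat.exists_infinite_primes ((d * (L.map Prod.snd).prod).natAbs + 1)
  have hndvd : ¬ (p : ℤ) ∣ d * (L.map Prod.snd).prod := by
    intro h
    have := Nat.le_of_dvd (Int.natAbs_pos.2 (mul_ne_zero hdet hE)) (Int.natCast_dvd.1 h)
    omega
  have : Fact p.Prime := ⟨hp⟩
  set f := (sylRep p L hL).rangeRestrict
  have hPG := isPGroup_range p L hL
  have := hPG.isNilpotent
  have hcop : IsCoprime (Nat.card (sylRep p L hL).range : ℤ) d := by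
    obtain ⟨m, hm⟩ := IsPGroup.iff_card.1 hPG
    rw [hm, Nat.cast_pow]
    apply IsCoprime.pow_left
    exact ((Nat.prime_iff_prime_int.1 hp).coprime_iff_not_dvd).2
      fun h => hndvd (h.mul_right _)
  obtain ⟨y, hy⟩ := exists_lift_eq s _ inferInstance hcop fun i => f (FreeGroup.of i)
  have hcomp : (FreeGroup.lift y).comp (FreeGroup.lift s) = f := by
    ext1 i
    simp [hy]
  have hf1 : f (sylProd L) = 1 := by
    rw [← hcomp, MonoidHom.comp_apply, hw, map_one]
  have hr1 : sylRep p L hL (sylProd L) = 1 := congrArg Subtype.val hf1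
  have hent := (sylRep_suffix p L hL L [] rfl 0).2 rfl
  have hne : (0 : Fin (L.length + 1)) ≠ Fin.last _ := by
    intro h
    have h' : L.length = 0 := by simpa using (congrArg Fin.val h).symm
    rw [List.length_eq_zero_iff] at h'
    exact hw1 (by simp [h', sylProd])
  rw [hr1, Units.val_one, Matrix.one_apply_ne hne] at hent
  exact hndvd (((ZMod.intCast_zmod_eq_zero_iff_dvd _ p).1 hent.symm).mul_left _)

/-- A finite generating set contains `n` elements with independent exponent-sum vectors. -/
lemma exists_det_ne_zero {n : ℕ} (S : Set (FreeGroup (Fin n))) (hS : Subgroup.closure S = ⊤) :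
    ∃ s : Fin n → FreeGroup (Fin n), (∀ i, s i ∈ S) ∧
      (Matrix.of fun i j => expSum (s i) j).det ≠ 0 := by
  set v : FreeGroup (Fin n) → Fin n → ℚ := fun g j => (expSum g j : ℚ) with hv
  have hmem : ∀ g, v g ∈ Submodule.span ℚ (v '' S) := by
    intro g
    have hg : g ∈ Subgroup.closure S := hS ▸ Subgroup.mem_top g
    induction hg using Subgroup.closure_induction with
    | mem x hx => exact Submodule.subset_span ⟨x, hx, rfl⟩
    | one =>
      have : v 1 = 0 := by ext j; simp [hv, expSum_one]
      rw [this]; exact Submodule.zero_mem _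
    | mul x y _ _ hx hy =>
      have : v (x * y) = v x + v y := by ext j; simp [hv, expSum_mul]
      rw [this]; exact Submodule.add_mem _ hx hy
    | inv x _ hx =>
      have : v x⁻¹ = - v x := by ext j; simp [hv, expSum_inv]
      rw [this]; exact Submodule.neg_mem _ hx
  have hspan : Submodule.span ℚ (v '' S) = ⊤ := by
    rw [eq_top_iff, ← (Pi.basisFun ℚ (Fin n)).span_eq, Submodule.span_le]
    rintro _ ⟨i, rfl⟩
    have : v (FreeGroup.of i) = Pi.basisFun ℚ (Fin n) i := by
      ext j; simp [hv, expSum_of, Pi.single_apply]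
    exact this ▸ hmem _
  obtain ⟨f, hf, -, hli⟩ := Submodule.exists_fun_fin_finrank_span_eq ℚ (v '' S)
  have hn : Module.finrank ℚ (Submodule.span ℚ (v '' S)) = n := by
    rw [hspan, finrank_top]; simp
  choose g hgS hgf using hf
  refine ⟨fun i => g (finCongr hn.symm i), fun i => hgS _, ?_⟩
  have hli' : LinearIndependent ℚ
      ((Matrix.of fun i j => expSum (g (finCongr hn.symm i)) j).map (Int.cast : ℤ → ℚ)).row := by
    have hrow : ((Matrix.of fun i j => expSum (g (finCongr hn.symm i)) j).map
        (Int.cast : ℤ → ℚ)).row = f ∘ finCongr hn.symm := by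
      ext i j
      simp [← hgf, hv]
    rw [hrow]
    exact hli.comp _ (finCongr hn.symm).injective
  rw [Matrix.linearIndependent_rows_iff_isUnit, Matrix.isUnit_iff_isUnit_det] at hli'
  have h0 := hli'.ne_zero
  rw [← Int.cast_det] at h0
  exact_mod_cast h0

/-! ### Balls and growth rates -/

section Balls

variable {G : Type*} [Group G] {S : Set G}

lemma prod_mem_wball (l : List G) (hl : ∀ s ∈ l, s ∈ S ∪ S⁻¹) {k : ℕ} (hk : l.length ≤ k) :
    l.prod ∈ wball S k :=
  have h : IsWordProd S ((1 : G)⁻¹ * l.prod) l.length := ⟨l, rfl, hl, by simp⟩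
  (Nat.sInf_le h).trans hk

/-- Generation is needed here: without it `wdist` could be the junk value `sInf ∅ = 0`. -/
lemma exists_list_of_mem_wball (hS : Subgroup.closure S = ⊤) {k : ℕ} {g : G}
    (hg : g ∈ wball S k) :
    ∃ l : List G, l.length ≤ k ∧ (∀ s ∈ l, s ∈ S ∪ S⁻¹) ∧ l.prod = g := by
  have hne : {m | IsWordProd S ((1 : G)⁻¹ * g) m}.Nonempty := by
    have hg : g ∈ (Subgroup.closure S).toSubmonoid := by simp [hS]
    rw [Subgroup.closure_toSubmonoid] at hg
    obtain ⟨l, hl, hp⟩ := Submonoid.exists_list_of_mem_closure hg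
    exact ⟨l.length, l, rfl, hl, by simp [hp]⟩
  obtain ⟨l, hl, hmem, hp⟩ := Nat.sInf_mem hne
  exact ⟨l, hl.trans_le hg, hmem, by simpa using hp⟩

open scoped Pointwise in
lemma wball_finite_and_ncard_le (hfin : S.Finite) (hS : Subgroup.closure S = ⊤) :
    ∃ C : ℕ, ∀ k, (wball S k).Finite ∧ (wball S k).ncard ≤ C ^ k := by
  classical
  set T : Finset G := insert 1 (hfin.toFinset ∪ hfin.toFinset⁻¹)
  have h1 : (1 : G) ∈ T := Finset.mem_insert_self _ _
  have hsub : ∀ k, wball S k ⊆ ((T ^ k : Finset G) : Set G) := by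
    intro k g hg
    obtain ⟨l, hl, hm, rfl⟩ := exists_list_of_mem_wball hS hg
    have hT : ∀ l : List G, (∀ s ∈ l, s ∈ S ∪ S⁻¹) → l.prod ∈ T ^ l.length := by
      intro l
      induction l with
      | nil => simp
      | cons a l ih =>
        intro h
        rw [List.prod_cons, List.length_cons, pow_succ']
        refine Finset.mul_mem_mul ?_ (ih fun s hs => h s (List.mem_cons_of_mem _ hs))
        have := h a List.mem_cons_self
        simp only [T, Finset.mem_insert, Finset.mem_union, Finset.mem_inv',
          Set.Finite.mem_toFinset]
        exact Or.inr (by simpa using this)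
    exact Finset.pow_subset_pow_right h1 hl (hT l hm)
  refine ⟨T.card, fun k => ⟨(Finset.finite_toSet _).subset (hsub k), ?_⟩⟩
  refine (Set.ncard_le_ncard (hsub k) (Finset.finite_toSet _)).trans ?_
  rw [Set.ncard_coe_finset]
  exact Finset.card_pow_le

lemma le_growthRate (hfin : S.Finite) (hS : Subgroup.closure S = ⊤) {c : ℝ} (hc : 0 ≤ c)
    (h : ∀ k : ℕ, 1 ≤ k → c ^ k ≤ (wball S k).ncard) : c ≤ growthRate S := by
  obtain ⟨C, hC⟩ := wball_finite_and_ncard_le hfin hS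
  refine Filter.le_limsup_of_frequently_le (Filter.Eventually.frequently ?_) ?_
  · filter_upwards [Filter.eventually_ge_atTop 1] with k hk
    calc c = (c ^ k) ^ ((k : ℝ)⁻¹) := (Real.pow_rpow_inv_natCast hc (by omega)).symm
      _ ≤ _ := Real.rpow_le_rpow (by positivity) (h k hk) (by positivity)
  · refine Filter.isBoundedUnder_of_eventually_le (a := (C : ℝ)) ?_
    filter_upwards [Filter.eventually_ge_atTop 1] with k hk
    calc ((wball S k).ncard : ℝ) ^ ((k : ℝ)⁻¹) ≤ ((C : ℝ) ^ k) ^ ((k : ℝ)⁻¹) :=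
          Real.rpow_le_rpow (by positivity) (by exact_mod_cast (hC k).2) (by positivity)
      _ = C := Real.pow_rpow_inv_natCast (by positivity) (by omega)

/-- A bound `#B(k) ≤ D k c ^ k` on the balls gives growth rate at most `c`. -/
lemma growthRate_le {c D : ℝ} (hc : 0 ≤ c) (hD : 0 < D)
    (h : ∀ k : ℕ, 1 ≤ k → ((wball S k).ncard : ℝ) ≤ D * k * c ^ k) : growthRate S ≤ c := by
  have hlim : Filter.Tendsto (fun k : ℕ => D ^ ((k : ℝ)⁻¹) * (k : ℝ) ^ (1 / (k : ℝ)) * c)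
      Filter.atTop (nhds c) := by
    have h1 : Filter.Tendsto (fun k : ℕ => D ^ ((k : ℝ)⁻¹)) Filter.atTop (nhds 1) := by
      have := (Real.continuousAt_const_rpow (b := 0) hD.ne').tendsto.comp
        (tendsto_inv_atTop_nhds_zero_nat (𝕜 := ℝ))
      simpa [Function.comp_def] using this
    have h2 := tendsto_rpow_div.comp tendsto_natCast_atTop_atTop
    simpa using (h1.mul h2).mul_const c
  rw [← hlim.limsup_eq]
  refine Filter.limsup_le_limsup ?_ ?_ hlim.isBoundedUnder_le
  · filter_upwards [Filter.eventually_ge_atTop 1] with k hk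
    calc ((wball S k).ncard : ℝ) ^ ((k : ℝ)⁻¹) ≤ (D * k * c ^ k) ^ ((k : ℝ)⁻¹) :=
          Real.rpow_le_rpow (by positivity) (h k hk) (by positivity)
      _ = _ := by
        rw [Real.mul_rpow (by positivity) (by positivity),
          Real.mul_rpow (by positivity) (by positivity),
          Real.pow_rpow_inv_natCast hc (by omega), one_div]
  · exact Filter.isCoboundedUnder_le_of_le _ (x := 0) fun k => by positivity

end Balls

/-! ### Counting reduced words -/

/-- Reduced words of length `m + 1` with first letter `a`. -/
def redWords (n : ℕ) : ℕ → Fin n × Bool → Finset (List (Fin n × Bool))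
  | 0, a => {[a]}
  | m + 1, a => (Finset.univ.erase (a.1, !a.2)).biUnion fun b =>
      (redWords n m b).image (List.cons a)

lemma mem_redWords {n : ℕ} (m : ℕ) (a : Fin n × Bool) (l : List (Fin n × Bool)) :
    l ∈ redWords n m a ↔ l.length = m + 1 ∧ l.head? = some a ∧ FreeGroup.IsReduced l := by
  induction m generalizing a l with
  | zero =>
    simp only [redWords, Finset.mem_singleton]
    constructor
    · rintro rfl; simp [FreeGroup.IsReduced]
    · rintro ⟨h1, h2, -⟩
      obtain ⟨b, rfl⟩ := List.length_eq_one_iff.1 (by simpa using h1)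
      simpa using h2
  | succ m ih =>
    have key : ∀ b : Fin n × Bool, b ≠ (a.1, !a.2) ↔ (a.1 = b.1 → a.2 = b.2) := by
      rintro ⟨b1, b2⟩
      rcases a with ⟨a1, a2⟩
      cases a2 <;> cases b2 <;> simp [eq_comm]
    simp only [redWords, Finset.mem_biUnion, Finset.mem_erase, Finset.mem_univ, and_true,
      Finset.mem_image, ih]
    constructor
    · rintro ⟨b, hb, l, ⟨h1, h2, h3⟩, rfl⟩
      rcases l with _ | ⟨c, l⟩
      · simp at h1
      · obtain rfl : c = b := by simpa using h2
        exact ⟨by simpa using h1, rfl, List.isChain_cons_cons.2 ⟨(key c).1 hb, h3⟩⟩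
    · rintro ⟨h1, h2, h3⟩
      rcases l with _ | ⟨c, _ | ⟨b, l⟩⟩
      · simp at h1
      · simp at h1
      · obtain rfl : c = a := by simpa using h2
        have := List.isChain_cons_cons.1 h3
        exact ⟨b, (key b).2 this.1, b :: l, ⟨by simpa using h1, rfl, this.2⟩, rfl⟩

lemma redWords_disjoint {n m : ℕ} {a b : Fin n × Bool} (hab : a ≠ b) :
    Disjoint (redWords n m a) (redWords n m b) := by
  rw [Finset.disjoint_left]
  intro l h1 h2
  have := ((mem_redWords m a l).1 h1).2.1.symm.trans ((mem_redWords m b l).1 h2).2.1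
  exact hab (by simpa using this)

lemma card_redWords {n : ℕ} (m : ℕ) (a : Fin n × Bool) :
    (redWords n m a).card = (2 * n - 1) ^ m := by
  induction m generalizing a with
  | zero => simp [redWords]
  | succ m ih =>
    rw [redWords, Finset.card_biUnion]
    · simp only [Finset.card_image_of_injective _ List.cons_injective, ih, Finset.sum_const]
      rw [Finset.card_erase_of_mem (Finset.mem_univ _)]
      simp [pow_succ', mul_comm]
    · intro b _ c _ hbc
      exact (Finset.disjoint_image List.cons_injective).2 (redWords_disjoint hbc)

/-- Reduced words of length `m + 1`. -/
def redSphere (n m : ℕ) : Finset (List (Fin n × Bool)) :=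
  Finset.univ.biUnion (redWords n m)

lemma mem_redSphere {n m : ℕ} (l : List (Fin n × Bool)) :
    l ∈ redSphere n m ↔ l.length = m + 1 ∧ FreeGroup.IsReduced l := by
  simp only [redSphere, Finset.mem_biUnion, Finset.mem_univ, true_and, mem_redWords]
  constructor
  · rintro ⟨a, h1, -, h2⟩; exact ⟨h1, h2⟩
  · rintro ⟨h1, h2⟩
    rcases l with _ | ⟨a, l⟩
    · simp at h1
    · exact ⟨a, h1, rfl, h2⟩

lemma card_redSphere (n m : ℕ) : (redSphere n m).card = 2 * n * (2 * n - 1) ^ m := by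
  rw [redSphere, Finset.card_biUnion fun b _ c _ hbc => redWords_disjoint hbc]
  simp [card_redWords, mul_comm]

/-- Lower bound on balls when `S` contains a basis of a free subgroup of rank `n`. -/
lemma le_ncard_wball {n : ℕ} {S : Set (FreeGroup (Fin n))} (hfin : S.Finite)
    (hS : Subgroup.closure S = ⊤) (s : Fin n → FreeGroup (Fin n)) (hs : ∀ i, s i ∈ S)
    (hinj : Function.Injective (FreeGroup.lift s)) (k : ℕ) (hk : 1 ≤ k) :
    (2 * n - 1) ^ k ≤ (wball S k).ncard := by
  classical
  obtain ⟨m, rfl⟩ : ∃ m, k = m + 1 := ⟨k - 1, by omega⟩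
  obtain ⟨C, hC⟩ := wball_finite_and_ncard_le hfin hS
  set F : List (Fin n × Bool) → FreeGroup (Fin n) := fun l => FreeGroup.lift s (FreeGroup.mk l)
  have hF : Set.InjOn F (redSphere n m) := by
    intro l hl l' hl' h
    have h1 := ((mem_redSphere l).1 hl).2.reduce_eq
    have h2 := ((mem_redSphere l').1 hl').2.reduce_eq
    have := congrArg FreeGroup.toWord (hinj h)
    rwa [FreeGroup.toWord_mk, FreeGroup.toWord_mk, h1, h2] at this
  have hsub : ((((redSphere n m).image F : Finset _)) : Set (FreeGroup (Fin n))) ⊆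
      wball S (m + 1) := by
    intro g hg
    obtain ⟨l, hl, rfl⟩ := Finset.mem_image.1 hg
    simp only [F, FreeGroup.lift_mk]
    refine prod_mem_wball _ ?_ (by simp [((mem_redSphere l).1 hl).1])
    intro x hx
    obtain ⟨⟨i, e⟩, -, rfl⟩ := List.mem_map.1 hx
    cases e
    · exact Or.inr (by simpa using hs i)
    · exact Or.inl (hs i)
  have := Set.ncard_le_ncard hsub (hC _).1
  rw [Set.ncard_coe_finset, Finset.card_image_of_injOn hF, card_redSphere] at this
  refine le_trans ?_ this
  rw [pow_succ']
  exact Nat.mul_le_mul_right _ (by omega)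

lemma closure_range_basis {n : ℕ} (b : FreeGroupBasis (Fin n) (FreeGroup (Fin n))) :
    Subgroup.closure (Set.range b) = ⊤ := by
  have h : Set.range b = b.repr.symm.toMonoidHom '' Set.range FreeGroup.of := by
    rw [← Set.range_comp]
    congr 1
  rw [h, ← MonoidHom.map_closure, FreeGroup.closure_range_of, Subgroup.map_top_of_surjective]
  exact b.repr.symm.surjective

/-- Upper bound on balls for a free basis: an element of the ball of radius `k` is a reduced word
of length at most `k`. -/
lemma ncard_wball_basis_le {n : ℕ} (hn : 1 ≤ n)
    (b : FreeGroupBasis (Fin n) (FreeGroup (Fin n))) (k : ℕ) (hk : 1 ≤ k) :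
    (wball (Set.range b) k).ncard ≤ 4 * n * k * (2 * n - 1) ^ k := by
  set U : Finset (List (Fin n × Bool)) := insert [] ((Finset.range k).biUnion (redSphere n))
  have hmaps : ∀ g ∈ wball (Set.range b) k, (b.repr g).toWord ∈ U := by
    intro g hg
    obtain ⟨l, hl, hm, rfl⟩ := exists_list_of_mem_wball (closure_range_basis b) hg
    have hnorm : ∀ l : List (FreeGroup (Fin n)),
        (∀ s ∈ l, s ∈ Set.range b ∪ (Set.range b)⁻¹) → (b.repr l.prod).norm ≤ l.length := by
      intro l
      induction l with
      | nil => simp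
      | cons a l ih =>
        intro h
        rw [List.prod_cons, map_mul, List.length_cons, add_comm]
        refine (FreeGroup.norm_mul_le _ _).trans
          (Nat.add_le_add ?_ (ih fun s hs => h s (List.mem_cons_of_mem _ hs)))
        rcases h a List.mem_cons_self with ⟨i, rfl⟩ | ⟨i, hi⟩
        · simp
        · rw [← FreeGroup.norm_inv_eq, ← map_inv, ← hi]
          simp
    have hle := (hnorm l hm).trans hl
    set w := b.repr l.prod
    rcases Nat.eq_zero_or_pos w.toWord.length with h0 | h0
    · rw [List.length_eq_zero_iff] at h0
      simp [U, h0]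
    · refine Finset.mem_insert_of_mem (Finset.mem_biUnion.2 ⟨w.toWord.length - 1, ?_, ?_⟩)
      · have : w.toWord.length ≤ k := hle
        exact Finset.mem_range.2 (by omega)
      · exact (mem_redSphere _).2 ⟨by omega, FreeGroup.isReduced_toWord⟩
  have h1 : (wball (Set.range b) k).ncard ≤ U.card := by
    rw [← Set.ncard_coe_finset]
    refine Set.ncard_le_ncard_of_injOn (fun g => (b.repr g).toWord) hmaps ?_ (Finset.finite_toSet _)
    exact (FreeGroup.toWord_injective.comp b.repr.injective).injOn
  have hq : 1 ≤ 2 * n - 1 := by omega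
  have h2 : ((Finset.range k).biUnion (redSphere n)).card ≤ k * (2 * n * (2 * n - 1) ^ k) := by
    refine Finset.card_biUnion_le.trans ?_
    refine (Finset.sum_le_card_nsmul _ _ (2 * n * (2 * n - 1) ^ k) ?_).trans (by simp)
    intro m hm
    rw [card_redSphere]
    exact Nat.mul_le_mul_left _ (Nat.pow_le_pow_right hq (Finset.mem_range.1 hm).le)
  have h3 : 1 ≤ k * (2 * n * (2 * n - 1) ^ k) :=
    Nat.one_le_iff_ne_zero.2 (by positivity)
  calc _ ≤ U.card := h1
    _ ≤ _ := Finset.card_insert_le _ _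
    _ ≤ k * (2 * n * (2 * n - 1) ^ k) + k * (2 * n * (2 * n - 1) ^ k) := by omega
    _ = _ := by ring

/-! ### The minimal growth rate -/

/-- The minimal exponential growth rate of the free group `F_n` (`n ≥ 1`)
is `2n - 1`: every finite generating system has growth rate at least `2n - 1`, any free
generating system realizes `2n - 1`, and the infimum over all finite generating systems
is `2n - 1`. -/
theorem minimal_growth_rate_free_group (n : ℕ) (hn : 1 ≤ n) :
    (∀ S : Set (FreeGroup (Fin n)), S.Finite → Subgroup.closure S = ⊤ →
      (2 * (n : ℝ) - 1) ≤ growthRate S) ∧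
    (∀ b : FreeGroupBasis (Fin n) (FreeGroup (Fin n)),
      growthRate (Set.range b) = 2 * (n : ℝ) - 1) ∧
    sInf {r : ℝ | ∃ S : Set (FreeGroup (Fin n)),
        S.Finite ∧ Subgroup.closure S = ⊤ ∧ r = growthRate S} = 2 * (n : ℝ) - 1 := by
  have hcast : ((2 * n - 1 : ℕ) : ℝ) = 2 * (n : ℝ) - 1 := by
    rw [Nat.cast_sub (by omega)]
    simp
  have hpos : 0 ≤ 2 * (n : ℝ) - 1 := hcast ▸ Nat.cast_nonneg _
  have lower : ∀ S : Set (FreeGroup (Fin n)), S.Finite → Subgroup.closure S = ⊤ →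
      (2 * (n : ℝ) - 1) ≤ growthRate S := by
    intro S hfin hS
    obtain ⟨s, hs, hdet⟩ := exists_det_ne_zero S hS
    refine le_growthRate hfin hS hpos fun k hk => ?_
    rw [← hcast]
    exact_mod_cast le_ncard_wball hfin hS s hs (lift_injective_of_det_ne_zero s hdet) k hk
  have basis : ∀ b : FreeGroupBasis (Fin n) (FreeGroup (Fin n)),
      growthRate (Set.range b) = 2 * (n : ℝ) - 1 := by
    intro b
    refine le_antisymm ?_ (lower _ (Set.finite_range _) (closure_range_basis b))
    refine growthRate_le (D := 4 * n) hpos (by positivity) fun k hk => ?_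
    rw [← hcast]
    exact_mod_cast ncard_wball_basis_le hn b k hk
  refine ⟨lower, basis, IsLeast.csInf_eq ⟨?_, ?_⟩⟩
  · let b := FreeGroupBasis.ofFreeGroup (Fin n)
    exact ⟨Set.range b, Set.finite_range _, closure_range_basis b, (basis b).symm⟩
  · rintro r ⟨S, hfin, hS, rfl⟩
    exact lower S hfin hS
end

section
/- For every n ≥ 2, the free group F_n on n generators admits a family 𝒮 of finite symmetric generating systems with Property (★); consequently (since F_n is non-abelian and y⁻¹xy = x⁻¹ implies x = e in F_n) every 𝒮-uniform quasi-isometry of F_n is a left translation. -/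
/-- Property (★): for all `g ≠ h`, `g ≠ h⁻¹` and every positive `R` there is `S ∈ 𝒮`
containing one of `g`, `h` while the other has word norm at least `R`. -/
def PropertyStar {G : Type*} [Group G] (𝒮 : Set (Set G)) : Prop :=
  ∀ g h : G, g ≠ h → g ≠ h⁻¹ → ∀ R : ℕ, 0 < R →
    ∃ S ∈ 𝒮, (g ∈ S ∧ R ≤ wnorm S h) ∨ (h ∈ S ∧ R ≤ wnorm S g)

/-- `φ` is an `𝒮`-uniform quasi-isometry of `G`: for some fixed `λ, ε ≥ 0` and some
`φ'`, the pair `(φ, φ')` is a `(λ, ε)`-quasi-isometry of `(G, d_S)` for every `S ∈ 𝒮`. -/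
def UniformQI {G : Type*} [Group G] (𝒮 : Set (Set G)) (φ : G → G) : Prop :=
  ∃ lam eps : ℝ, 0 ≤ lam ∧ 0 ≤ eps ∧ ∃ φ' : G → G,
    ∀ S ∈ 𝒮, IsQIPair (wdistR S) (wdistR S) φ φ' lam eps

/-- The ring of additive endomorphisms of `ℤ`-valued functions on words. -/
abbrev WordEnd (α : Type*) : Type _ := Module.End ℤ (List α → ℤ)

/-! ### A faithful unipotent representation of the free group -/

section Representation

open scoped Pointwise

variable {α : Type*}

/-- Nonzero functions on words of bounded length whose words of maximal length all start
with `i`. -/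
def topSet (i : α) : Set (List α → ℤ) :=
  {φ | ∃ d : ℕ, (∀ w, d < w.length → φ w = 0) ∧
    (∀ w, w.length = d → φ w ≠ 0 → w.head? = some i) ∧ ∃ w, w.length = d ∧ φ w ≠ 0}

theorem topSet_disjoint {i j : α} (hij : i ≠ j) : Disjoint (topSet i) (topSet j) := by
  rw [Set.disjoint_left]
  rintro φ ⟨d, h0, h1, w, hw, hφ⟩ ⟨d', h0', h1', w', hw', hφ'⟩
  rcases lt_trichotomy d d' with h | h | h
  · exact hφ' (h0 w' (by omega))
  · subst h
    exact hij (Option.some.inj ((h1 w hw hφ).symm.trans (h1' w hw hφ)))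
  · exact hφ (h0' w (by omega))

variable [DecidableEq α]

/-- `shiftEnd i` prepends the letter `i` to words not starting with `i` and kills the others
(written on coordinates of functions on words), so that it squares to zero. -/
def shiftEnd (i : α) : WordEnd α where
  toFun φ w := match w with
    | [] => 0
    | j :: v => if j = i ∧ v.head? ≠ some i then φ v else 0
  map_add' φ ψ := by
    funext w
    cases w with
    | nil => simp
    | cons j v => by_cases h : j = i ∧ v.head? ≠ some i <;> simp [h]
  map_smul' c φ := by
    funext w
    cases w with
    | nil => simp
    | cons j v => by_cases h : j = i ∧ v.head? ≠ some i <;> simp [h]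

theorem shiftEnd_nil (i : α) (φ : List α → ℤ) : shiftEnd i φ [] = 0 := rfl

theorem shiftEnd_cons (i j : α) (v : List α) (φ : List α → ℤ) :
    shiftEnd i φ (j :: v) = if j = i ∧ v.head? ≠ some i then φ v else 0 := rfl

theorem shiftEnd_mul_self (i : α) : shiftEnd i * shiftEnd i = 0 := by
  refine LinearMap.ext fun φ => funext fun w => ?_
  rw [Module.End.mul_apply]
  rcases w with _ | ⟨j, _ | ⟨k, v⟩⟩
  · simp [shiftEnd_nil]
  · simp [shiftEnd_cons, shiftEnd_nil]
  · simp only [shiftEnd_cons]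
    by_cases hk : k = i <;> simp [hk]

/-- The unipotent unit `1 + shiftEnd i`. -/
def shiftUnit (i : α) : (WordEnd α)ˣ where
  val := 1 + shiftEnd i
  inv := 1 - shiftEnd i
  val_inv := by simp [mul_sub, add_mul, shiftEnd_mul_self]
  inv_val := by simp [mul_add, sub_mul, shiftEnd_mul_self]

theorem shiftUnit_zpow (i : α) (m : ℤ) :
    ((shiftUnit i ^ m : (WordEnd α)ˣ) : WordEnd α) = 1 + m • shiftEnd i := by
  have hv : ((shiftUnit i : (WordEnd α)ˣ) : WordEnd α) = 1 + shiftEnd i := rfl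
  have hi : (((shiftUnit i)⁻¹ : (WordEnd α)ˣ) : WordEnd α) = 1 - shiftEnd i := rfl
  induction m with
  | zero => simp
  | succ k ih =>
    rw [zpow_add_one, Units.val_mul, ih, hv, add_mul, mul_add, smul_mul_assoc, mul_add,
      shiftEnd_mul_self, add_smul]
    simp only [mul_one, one_mul, add_zero, one_smul]
    abel
  | pred k ih =>
    rw [zpow_sub_one, Units.val_mul, ih, hi, add_mul, mul_sub, smul_mul_assoc, mul_sub,
      shiftEnd_mul_self, sub_smul]
    simp only [mul_one, one_mul, sub_zero, one_smul]
    abel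

/-- The Magnus-type representation `x_i ↦ 1 + shiftEnd i` of the free group. -/
def magnusRep (α : Type*) [DecidableEq α] : FreeGroup α →* (WordEnd α)ˣ :=
  FreeGroup.lift shiftUnit

theorem topSet_nonempty (i : α) : (topSet i).Nonempty := by
  refine ⟨fun w => if w = [i] then 1 else 0, 1, ?_, ?_, [i], rfl, by simp⟩
  · intro w hw
    have : w ≠ [i] := by rintro rfl; simp at hw
    simp [this]
  · intro w _ h
    have : w = [i] := by by_contra h'; simp [h'] at h
    simp [this]

/-- Nontrivial powers of `1 + shiftEnd i` play ping-pong on the sets `topSet j`: the top degree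
part of `φ + m • shiftEnd i φ` is `m` times the top degree part of `φ`, prefixed by `i`. -/
theorem topSet_pingpong {i j : α} (hij : i ≠ j) {m : ℤ} (hm : m ≠ 0) {φ : List α → ℤ}
    (hφ : φ ∈ topSet j) : φ + m • shiftEnd i φ ∈ topSet i := by
  obtain ⟨d, h0, h1, w, hw, hne⟩ := hφ
  refine ⟨d + 1, ?_, ?_, i :: w, by simp [hw], ?_⟩
  · intro u hu
    rcases u with _ | ⟨k, v⟩
    · simp at hu
    · have hv : d < v.length := by simpa using hu
      simp [shiftEnd_cons, h0 v hv, h0 (k :: v) (by simp; omega)]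
  · intro u hu hne'
    rcases u with _ | ⟨k, v⟩
    · simp at hu
    · by_contra hk
      have hk' : k ≠ i := by simpa using hk
      apply hne'
      simp [shiftEnd_cons, hk', h0 (k :: v) (by omega)]
  · have hh := h1 w hw hne
    simp [shiftEnd_cons, hh, hij.symm, h0 (i :: w) (by simp; omega), hm, hne]

theorem magnusRep_injective [Nontrivial α] : Function.Injective (magnusRep α) := by
  have key : magnusRep α =
      (Monoid.CoprodI.lift fun i : α => FreeGroup.lift fun _ : Unit => shiftUnit i).comp
        (freeGroupEquivCoprodI (ι := α)).toMonoidHom := by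
    ext i
    simp [magnusRep]
  rw [key, MonoidHom.coe_comp]
  refine Function.Injective.comp ?_ (MulEquiv.injective freeGroupEquivCoprodI)
  refine Monoid.CoprodI.lift_injective_of_ping_pong (α := List α → ℤ)
    (fun i : α => FreeGroup.lift fun _ : Unit => shiftUnit i) ?_ topSet topSet_nonempty
    (fun i j hij => topSet_disjoint hij) ?_
  · refine Or.inr ⟨Classical.arbitrary α, ?_⟩
    rw [FreeGroup.freeGroupUnitEquivInt.cardinal_eq, Cardinal.mk_denumerable]
    exact Cardinal.natCast_le_aleph0
  · rintro i j hij
    refine FreeGroup.freeGroupUnitEquivInt.forall_congr_left.mpr ?_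
    intro m hm1
    change FreeGroup.lift (fun _ => shiftUnit i) (FreeGroup.of () ^ m) • topSet j ⊆ topSet i
    have hm : m ≠ 0 := by
      rintro rfl
      apply hm1
      simp [FreeGroup.freeGroupUnitEquivInt]
    rw [map_zpow, FreeGroup.lift_apply_of]
    rintro _ ⟨φ, hφ, rfl⟩
    have := topSet_pingpong hij hm hφ
    convert this using 1
    change ((shiftUnit i ^ m : (WordEnd α)ˣ) : WordEnd α) φ = _
    rw [shiftUnit_zpow]
    rfl

end Representation

/-! ### Polynomial maps to the free group -/

section PolynomialMaps

open Polynomial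

variable {α : Type*} [DecidableEq α]

/-- A map `u : ℤ → F` to the free group is polynomial if its matrix coefficients in the
representation `magnusRep` are; as the ring is noncommutative, this is phrased by evaluating
a polynomial with coefficients in the ring at the (central) integers. -/
def IsPolyMap (u : ℤ → FreeGroup α) : Prop :=
  ∃ p : (WordEnd α)[X], ∀ N : ℤ, ((magnusRep α (u N) : (WordEnd α)ˣ) : WordEnd α) =
    p.eval (N : WordEnd α)

theorem isPolyMap_const (g : FreeGroup α) : IsPolyMap fun _ => g :=
  ⟨C (magnusRep α g : WordEnd α), fun N => by simp⟩

theorem IsPolyMap.mul {u v : ℤ → FreeGroup α} (hu : IsPolyMap u) (hv : IsPolyMap v) :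
    IsPolyMap fun N => u N * v N := by
  obtain ⟨p, hp⟩ := hu
  obtain ⟨q, hq⟩ := hv
  refine ⟨p * q, fun N => ?_⟩
  rw [map_mul, Units.val_mul, hp, hq, eval, eval, eval, eval₂_mul_noncomm]
  exact fun k => Int.commute_cast _ _

theorem isPolyMap_zpow (i : α) (c : ℤ) : IsPolyMap fun N => FreeGroup.of i ^ (N * c) := by
  refine ⟨1 + C (c • shiftEnd i) * X, fun N => ?_⟩
  rw [map_zpow, magnusRep, FreeGroup.lift_apply_of, shiftUnit_zpow, eval_add, eval_mul_X]
  simp only [eval_one, eval_C]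
  rw [mul_smul, (Int.commute_cast _ N).eq, ← zsmul_eq_mul]

theorem isPolyMap_listProd {ι : Type*} (f : ι → ℤ → FreeGroup α) (hf : ∀ k, IsPolyMap (f k))
    (l : List ι) : IsPolyMap fun N => (l.map fun k => f k N).prod := by
  induction l with
  | nil => simpa using isPolyMap_const (1 : FreeGroup α)
  | cons k l ih => simpa using (hf k).mul ih

/-- A polynomial map that avoids `h` at `0` takes the value `h` only finitely often. -/
theorem IsPolyMap.finite_eq [Nontrivial α] {u : ℤ → FreeGroup α} (hu : IsPolyMap u)
    {h : FreeGroup α} (h0 : u 0 ≠ h) : {N : ℤ | u N = h}.Finite := by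
  obtain ⟨p, hp⟩ := hu
  have hne : ((magnusRep α (u 0) : (WordEnd α)ˣ) : WordEnd α) ≠ (magnusRep α h : WordEnd α) :=
    fun e => h0 (magnusRep_injective (Units.ext e))
  have : ∃ φ w, (magnusRep α (u 0) : WordEnd α) φ w ≠ (magnusRep α h : WordEnd α) φ w := by
    by_contra! hc
    exact hne (LinearMap.ext fun φ => funext fun w => hc φ w)
  obtain ⟨φ, w, hφ⟩ := this
  -- A matrix coefficient that separates `u 0` from `h` turns `p` into an integer polynomial `q`.
  let coef : WordEnd α →+ ℤ :=
    { toFun := fun T => T φ w, map_zero' := rfl, map_add' := fun _ _ => rfl }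
  let q : ℤ[X] := ∑ k ∈ Finset.range (p.natDegree + 1), C (coef (p.coeff k)) * X ^ k
  have hq : ∀ N : ℤ, q.eval N = coef (magnusRep α (u N) : WordEnd α) := by
    intro N
    rw [hp, eval_finsetSum, eval_eq_sum_range, map_sum]
    refine Finset.sum_congr rfl fun k _ => ?_
    rw [← Int.cast_pow, (Int.commute_cast _ _).eq, ← zsmul_eq_mul, map_zsmul]
    simp [mul_comm]
  have hq0 : q - C (coef (magnusRep α h : WordEnd α)) ≠ 0 := by
    intro e
    have := congrArg (eval 0) e
    rw [eval_sub, hq, eval_C, eval_zero, sub_eq_zero] at this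
    exact hφ this
  refine (q - C (coef (magnusRep α h : WordEnd α))).roots.toFinset.finite_toSet.subset ?_
  intro N hN
  have hN' : u N = h := hN
  simp only [Finset.mem_coe, Multiset.mem_toFinset]
  rw [mem_roots hq0, IsRoot, eval_sub, hq, eval_C, hN', sub_self]

end PolynomialMaps

/-! ### Generating systems made of large powers -/

section Generating

variable {α : Type*}

/-- Letters of the generating system: `g`, the powers `x_i ^ N` and the powers `x_i ^ M`, and
their inverses (the second component is the sign). -/
def sysGen (g : FreeGroup α) (N M : ℤ) : Option (α × Bool) × Bool → FreeGroup α
  | (none, true) => g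
  | (none, false) => g⁻¹
  | (some (i, true), b) => FreeGroup.of i ^ (N * if b then 1 else -1)
  | (some (i, false), b) => FreeGroup.of i ^ (M * if b then 1 else -1)

theorem sysGen_inv (g : FreeGroup α) (N M : ℤ) (k : Option (α × Bool)) (b : Bool) :
    (sysGen g N M (k, b))⁻¹ = sysGen g N M (k, !b) := by
  rcases k with _ | ⟨i, c⟩ <;> cases b <;> try cases c
  all_goals simp [sysGen]

theorem range_sysGen_inv (g : FreeGroup α) (N M : ℤ) :
    (Set.range (sysGen g N M))⁻¹ = Set.range (sysGen g N M) := by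
  ext x
  rw [Set.mem_inv]
  constructor
  · rintro ⟨⟨k, b⟩, h⟩
    exact ⟨(k, !b), by rw [← sysGen_inv, h, inv_inv]⟩
  · rintro ⟨⟨k, b⟩, rfl⟩
    exact ⟨(k, !b), by rw [← sysGen_inv]⟩

theorem closure_sysGen (g : FreeGroup α) (N k : ℤ) :
    Subgroup.closure (Set.range (sysGen g N (1 + N * k))) = ⊤ := by
  rw [eq_top_iff, ← FreeGroup.closure_range_of, Subgroup.closure_le]
  rintro _ ⟨i, rfl⟩
  have h1 : FreeGroup.of i ^ N ∈ Subgroup.closure (Set.range (sysGen g N (1 + N * k))) :=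
    Subgroup.subset_closure ⟨(some (i, true), true), by simp [sysGen]⟩
  have h2 : FreeGroup.of i ^ (1 + N * k) ∈
      Subgroup.closure (Set.range (sysGen g N (1 + N * k))) :=
    Subgroup.subset_closure ⟨(some (i, false), true), by simp [sysGen]⟩
  have h3 := mul_mem h2 (zpow_mem h1 (-k))
  rw [← zpow_mul, ← zpow_add] at h3
  simpa using h3

theorem sysGen_zero_mem (g : FreeGroup α) (k : Option (α × Bool) × Bool) :
    sysGen g 0 0 k ∈ Subgroup.zpowers g := by
  rcases k with ⟨_ | ⟨i, c⟩, b⟩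
  · cases b <;> simp [sysGen]
  · cases c <;> simp [sysGen]

variable [DecidableEq α]

theorem isPolyMap_sysGen_left (g : FreeGroup α) (k : Option (α × Bool) × Bool) :
    IsPolyMap fun N => sysGen g N 0 k := by
  rcases k with ⟨_ | ⟨i, c⟩, b⟩
  · cases b <;> exact isPolyMap_const _
  · cases c
    · exact isPolyMap_const _
    · exact isPolyMap_zpow _ _

theorem isPolyMap_sysGen_right (g : FreeGroup α) (N : ℤ) (k : Option (α × Bool) × Bool) :
    IsPolyMap fun M => sysGen g N M k := by
  rcases k with ⟨_ | ⟨i, c⟩, b⟩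
  · cases b <;> exact isPolyMap_const _
  · cases c
    · exact isPolyMap_zpow _ _
    · exact isPolyMap_const _

/-- If `h` is not a power of `g`, some finite symmetric generating system contains `g` while
`h` has large norm. -/
theorem exists_system [Finite α] [Nontrivial α] {g h : FreeGroup α} (hgh : h ∉ Subgroup.zpowers g)
    (R : ℕ) : ∃ S : Set (FreeGroup α), (S.Finite ∧ S⁻¹ = S ∧ Subgroup.closure S = ⊤) ∧
      g ∈ S ∧ ∀ r, IsWordProd S h r → R ≤ r := by
  have hfin : {l : List (Option (α × Bool) × Bool) | l.length < R}.Finite :=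
    List.finite_length_lt _ R
  have step1 : (⋃ l ∈ {l : List (Option (α × Bool) × Bool) | l.length < R},
      {N : ℤ | (l.map fun k => sysGen g N 0 k).prod = h}).Finite := by
    refine hfin.biUnion fun l _ => ?_
    refine (isPolyMap_listProd _ (isPolyMap_sysGen_left g) l).finite_eq fun e => hgh ?_
    rw [← e]
    refine Subgroup.list_prod_mem _ fun x hx => ?_
    obtain ⟨k, -, rfl⟩ := List.mem_map.1 hx
    exact sysGen_zero_mem g k
  obtain ⟨N, hN⟩ := (step1.union (Set.finite_singleton 0)).exists_notMem
  simp only [Set.mem_union, Set.mem_iUnion, Set.mem_ofPred_eq, Set.mem_singleton_iff,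
    not_or, not_exists] at hN
  obtain ⟨hN, hN0⟩ := hN
  have step2 : (⋃ l ∈ {l : List (Option (α × Bool) × Bool) | l.length < R},
      {M : ℤ | (l.map fun k => sysGen g N M k).prod = h}).Finite := by
    refine hfin.biUnion fun l hl => ?_
    exact (isPolyMap_listProd _ (isPolyMap_sysGen_right g N) l).finite_eq (hN l hl)
  -- `M` is taken in the residue class of `1` modulo `N`, so that `x_i` is generated.
  have hinj : Function.Injective fun k : ℤ => 1 + N * k := fun a b e => by
    simpa [hN0] using e
  obtain ⟨k, hk⟩ := (step2.preimage hinj.injOn).exists_notMem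
  simp only [Set.mem_preimage, Set.mem_iUnion, Set.mem_ofPred_eq, not_exists] at hk
  refine ⟨Set.range (sysGen g N (1 + N * k)), ⟨Set.finite_range _, range_sysGen_inv _ _ _,
    closure_sysGen _ _ _⟩, ⟨(none, true), rfl⟩, ?_⟩
  rintro r ⟨l, hl, hmem, hprod⟩
  rw [range_sysGen_inv, Set.union_self] at hmem
  obtain ⟨l', rfl⟩ : ∃ l', List.map (sysGen g N (1 + N * k)) l' = l := by
    rw [← Set.mem_range, Set.range_list_map]
    exact hmem
  by_contra hr
  rw [List.length_map] at hl
  exact hk l' (by omega) hprod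

end Generating

/-! ### Word norms -/

section WordNorm

variable {G : Type*} [Group G]

theorem exists_isWordProd {S : Set G} (hS : Subgroup.closure S = ⊤) (g : G) :
    ∃ r, IsWordProd S g r := by
  have hg : g ∈ (Subgroup.closure S).toSubmonoid := by rw [hS]; trivial
  rw [Subgroup.closure_toSubmonoid] at hg
  obtain ⟨l, hl, hp⟩ := Submonoid.exists_list_of_mem_closure hg
  exact ⟨l.length, l, rfl, hl, hp⟩

theorem le_wnorm {S : Set G} (hS : Subgroup.closure S = ⊤) {g : G} {R : ℕ}
    (h : ∀ r, IsWordProd S g r → R ≤ r) : R ≤ wnorm S g := by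
  have hne : {n | IsWordProd S ((1 : G)⁻¹ * g) n}.Nonempty := by
    rw [inv_one, one_mul]
    exact exists_isWordProd hS g
  exact h _ (by simpa [wnorm, wdist] using Nat.sInf_mem hne)

theorem wdist_eq_wnorm (S : Set G) (x y : G) : wdist S x y = wnorm S (x⁻¹ * y) := by
  simp [wnorm, wdist]

theorem wnorm_le_one {S : Set G} {g : G} (hg : g ∈ S) : wnorm S g ≤ 1 :=
  Nat.sInf_le ⟨[g], rfl, by simp [hg], by simp⟩

theorem wnorm_one (S : Set G) : wnorm S 1 = 0 :=
  Nat.le_zero.1 (Nat.sInf_le ⟨[], rfl, by simp, by simp⟩)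

end WordNorm

/-! ### Rigidity of uniform quasi-isometries -/

section Translations

variable {G : Type*} [Group G]

/-- Property (★) applied to a pair `(1, m)`: elements of uniformly bounded norm are trivial. -/
theorem PropertyStar.eq_one {𝒮 : Set (Set G)} (h𝒮 : PropertyStar 𝒮) {m : G} {c : ℝ}
    (hm : ∀ S ∈ 𝒮, (wnorm S m : ℝ) ≤ c) : m = 1 := by
  by_contra hne
  obtain ⟨R, hR⟩ := exists_nat_gt c
  obtain ⟨S, hS, h | h⟩ := h𝒮 1 m (Ne.symm hne) (by simpa [eq_comm] using hne) (R + 1) (by omega)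
  · have h1 : ((R + 1 : ℕ) : ℝ) ≤ wnorm S m := by exact_mod_cast h.2
    have h2 := hm S hS
    push_cast at h1
    linarith
  · have := h.2
    rw [wnorm_one] at this
    omega

/-- A uniform quasi-isometry maps `x * g` to `φ x * g` or `φ x * g⁻¹`. -/
theorem UniformQI.step {𝒮 : Set (Set G)} (h𝒮 : PropertyStar 𝒮) {φ : G → G}
    (hφ : UniformQI 𝒮 φ) (x y : G) :
    (φ x)⁻¹ * φ y = x⁻¹ * y ∨ (φ x)⁻¹ * φ y = (x⁻¹ * y)⁻¹ := by
  obtain ⟨lam, eps, hlam, heps, φ', hQ⟩ := hφ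
  have hleft : ∀ z, φ' (φ z) = z := by
    intro z
    have : (φ' (φ z))⁻¹ * z = 1 := by
      refine h𝒮.eq_one (c := eps) fun S hS => ?_
      rw [← wdist_eq_wnorm]
      exact (hQ S hS).2.2.2 z
    exact inv_mul_eq_one.1 this
  have hup : ∀ S ∈ 𝒮, (wnorm S ((φ x)⁻¹ * φ y) : ℝ) ≤ lam * wnorm S (x⁻¹ * y) + eps := by
    intro S hS
    rw [← wdist_eq_wnorm, ← wdist_eq_wnorm]
    exact ((hQ S hS).1 x y).2
  have hdown : ∀ S ∈ 𝒮, (wnorm S (x⁻¹ * y) : ℝ) ≤ lam * wnorm S ((φ x)⁻¹ * φ y) + eps := by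
    intro S hS
    have := ((hQ S hS).2.1 (φ x) (φ y)).2
    rw [hleft, hleft] at this
    rw [← wdist_eq_wnorm, ← wdist_eq_wnorm]
    exact this
  by_contra! hne
  obtain ⟨R, hR⟩ := exists_nat_gt (lam + eps)
  have hbound : ∀ (S : Set G) (a b : G), a ∈ S → (wnorm S b : ℝ) ≤ lam * wnorm S a + eps →
      ¬ R + 1 ≤ wnorm S b := by
    intro S a b ha hb hRb
    have h1 : ((R + 1 : ℕ) : ℝ) ≤ wnorm S b := by exact_mod_cast hRb
    have h2 : (wnorm S a : ℝ) ≤ 1 := by exact_mod_cast wnorm_le_one ha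
    push_cast at h1
    nlinarith
  obtain ⟨S, hS, h | h⟩ := h𝒮 _ _ hne.1 hne.2 (R + 1) (by omega)
  · exact hbound S _ _ h.1 (hdown S hS) h.2
  · exact hbound S _ _ h.1 (hup S hS) h.2

/-- If square roots are unique, a conjugate of `y` equals `y⁻¹` only for `y = 1`: the relation
amounts to `(x * y) ^ 2 = x ^ 2`. -/
theorem eq_one_of_conj_eq_inv [IsMulTorsionFree G] {x y : G} (h : x⁻¹ * y * x = y⁻¹) :
    y = 1 := by
  have h2 : (x * y) ^ 2 = x ^ 2 := by
    calc (x * y) ^ 2 = x * y * (x * y) := pow_two _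
      _ = x * (x * (x⁻¹ * y * x) * y) := by group
      _ = x ^ 2 := by rw [h, inv_mul_cancel_right, pow_two]
  have := pow_left_injective (M := G) two_ne_zero h2
  simpa using this

/-- If `ψ x = x⁻¹` for some `x ≠ 1`, then in each of the four sign patterns for `ψ y` and
`(ψ x)⁻¹ * ψ y` the elements `x` and `y` commute, so that `x` is central. -/
theorem eq_id_of_signs [IsMulTorsionFree G] (hZ : ∀ x : G, (∀ y, y * x = x * y) → x = 1)
    {ψ : G → G} (h1 : ψ 1 = 1)
    (h : ∀ x y, (ψ x)⁻¹ * ψ y = x⁻¹ * y ∨ (ψ x)⁻¹ * ψ y = (x⁻¹ * y)⁻¹) (x : G) : ψ x = x := by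
  have hs : ∀ z, ψ z = z ∨ ψ z = z⁻¹ := fun z => by simpa [h1] using h 1 z
  rcases hs x with hx | hx
  · exact hx
  · suffices x = 1 by rw [this, h1]
    by_contra hx1
    refine hx1 (hZ x fun y => ?_)
    rcases h x y with hxy | hxy <;> rcases hs y with hy | hy <;> rw [hx, hy] at hxy
    · have h3 : x = x⁻¹ := by simpa using hxy
      exact absurd (self_eq_inv.1 h3) hx1
    · have h3 : y⁻¹ = x⁻¹ * (x⁻¹ * y) := by rw [← hxy]; group
      have h4 : y ^ 2 = x ^ 2 := by
        calc y ^ 2 = y * y := pow_two _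
          _ = x * x * (x⁻¹ * (x⁻¹ * y)) * y := by group
          _ = x ^ 2 := by rw [← h3, inv_mul_cancel_right, pow_two]
      rw [pow_left_injective (M := G) two_ne_zero h4]
    · have h3 : y = x⁻¹ * y⁻¹ * x := by
        calc y = x⁻¹ * (x⁻¹⁻¹ * y) := by group
          _ = _ := by rw [hxy]; group
      have h4 : y⁻¹ = 1 := eq_one_of_conj_eq_inv (x := x) (by rw [← h3, inv_inv])
      rw [inv_eq_one.1 h4]; simp
    · have h3 : x * y⁻¹ = y⁻¹ * x := by
        calc x * y⁻¹ = x⁻¹⁻¹ * y⁻¹ := by group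
          _ = _ := by rw [hxy]; group
      calc y * x = y * (x * y⁻¹) * y := by group
        _ = x * y := by rw [h3]; group

end Translations

/-! ### Centre and cyclic subgroups of free groups -/

section FreeGroupFacts

variable {α : Type*} [DecidableEq α]

/-- Free groups of rank at least two are centreless: if the reduced word of `x` starts with the
letter `i` and `j ≠ i`, then that of `x_j * x` is obtained by prepending `x_j`, whereas
`x * x_j` either starts with the letter `i` or is shorter. -/
theorem freeGroup_center_trivial [Nontrivial α] (x : FreeGroup α)
    (h : ∀ y, y * x = x * y) : x = 1 := by
  rcases hL : x.toWord with _ | ⟨⟨i, b⟩, T⟩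
  · exact FreeGroup.toWord_eq_nil_iff.1 hL
  · exfalso
    obtain ⟨j, hj⟩ := exists_ne i
    have hred : FreeGroup.IsReduced ((i, b) :: T) := hL ▸ FreeGroup.isReduced_toWord
    have h1 : (FreeGroup.of j * x).toWord = (j, true) :: (i, b) :: T := by
      rw [FreeGroup.toWord_mul, FreeGroup.toWord_of, hL]
      refine FreeGroup.IsReduced.reduce_eq ?_
      exact FreeGroup.isReduced_cons_cons.2 ⟨fun e => absurd e hj, hred⟩
    have h2 : ((j, true) :: (i, b) :: T).Sublist ((i, b) :: T ++ [(j, true)]) := by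
      rw [← h1, h, FreeGroup.toWord_mul, FreeGroup.toWord_of, hL]
      exact FreeGroup.Red.sublist FreeGroup.reduce.red
    have h3 := h2.eq_of_length (by simp)
    simp only [List.cons_append, List.cons.injEq, Prod.mk.injEq] at h3
    exact hj h3.1.1

theorem eq_or_eq_inv_of_mem_zpowers {G : Type*} [Group G] [IsMulTorsionFree G] {g h : G}
    (h1 : h ∈ Subgroup.zpowers g) (h2 : g ∈ Subgroup.zpowers h) : g = h ∨ g = h⁻¹ := by
  obtain ⟨a, rfl⟩ := Subgroup.mem_zpowers_iff.1 h1
  obtain ⟨b, hb⟩ := Subgroup.mem_zpowers_iff.1 h2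
  by_cases hg : g = 1
  · simp [hg]
  · rw [← zpow_mul] at hb
    have h0 : g ^ (a * b - 1) = 1 := by rw [zpow_sub_one, hb, mul_inv_cancel]
    have hab : a * b = 1 := sub_eq_zero.1 ((IsMulTorsionFree.zpow_eq_one_iff_right hg).1 h0)
    rcases Int.eq_one_or_neg_one_of_mul_eq_one hab with rfl | rfl <;> simp

end FreeGroupFacts

/-- For every `n ≥ 2` the free group `F_n` admits a family `𝒮` of
finite symmetric generating systems with Property (★); consequently every `𝒮`-uniform
quasi-isometry of `F_n` is a left translation. -/
theorem free_group_admits_property_star (n : ℕ) (hn : 2 ≤ n) :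
    ∃ 𝒮 : Set (Set (FreeGroup (Fin n))),
      (∀ S ∈ 𝒮, S.Finite ∧ S⁻¹ = S ∧ Subgroup.closure S = ⊤) ∧
      PropertyStar 𝒮 ∧
      ∀ φ : FreeGroup (Fin n) → FreeGroup (Fin n), UniformQI 𝒮 φ →
        ∃ c : FreeGroup (Fin n), ∀ x, φ x = c * x := by
  have : Nontrivial (Fin n) := Fin.nontrivial_iff_two_le.2 hn
  have hstar : PropertyStar {S : Set (FreeGroup (Fin n)) |
      S.Finite ∧ S⁻¹ = S ∧ Subgroup.closure S = ⊤} := by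
    intro g h hne hne' R _
    by_cases hg : h ∈ Subgroup.zpowers g
    · have hh : g ∉ Subgroup.zpowers h := fun hh =>
        (eq_or_eq_inv_of_mem_zpowers hg hh).elim hne hne'
      obtain ⟨S, hS, hmem, hR⟩ := exists_system hh R
      exact ⟨S, hS, Or.inr ⟨hmem, le_wnorm hS.2.2 hR⟩⟩
    · obtain ⟨S, hS, hmem, hR⟩ := exists_system hg R
      exact ⟨S, hS, Or.inl ⟨hmem, le_wnorm hS.2.2 hR⟩⟩
  refine ⟨_, fun S hS => hS, hstar, fun φ hφ => ⟨φ 1, fun x => ?_⟩⟩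
  have := eq_id_of_signs freeGroup_center_trivial (ψ := fun x => (φ 1)⁻¹ * φ x) (by simp)
    (fun x y => by simpa [mul_assoc] using hφ.step hstar x y) x
  exact (inv_mul_eq_iff_eq_mul.1 this)
end
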